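/- Let f be a nondegenerate binary cubic form over k such that there exists e ∈ k with e² = −108·Δ(f). Then the generalized Clifford algebra A_f is a free module of rank 18 over the central subalgebra k[γ_f] generated by γ_f, with basis given by the images in A_f of the 18 elements 1; x, y; x², xy, yx, y²; x²y, xy², y²x, yx²; x²y², xyxy, xyx², y²xy; x²y²x, xyxy²; x²y²xy. -/

import Mathlib

noncomputable section

open FreeAlgebra

variable (k : Type*) [Field k]

/-- Relations of the generalized Clifford algebra of the binary cubic form
a₀u³ + a₁u²v + a₂uv² + a₃v³. -/
inductive CRel (a₀ a₁ a₂ a₃ : k) : FreeAlgebra k (Fin 2) → FreeAlgebra k (Fin 2) → Prop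
  | r0 : CRel a₀ a₁ a₂ a₃ ((ι k 0) ^ 3) (algebraMap k (FreeAlgebra k (Fin 2)) a₀)
  | r1 : CRel a₀ a₁ a₂ a₃ ((ι k 0) ^ 2 * ι k 1 + ι k 0 * ι k 1 * ι k 0 + ι k 1 * (ι k 0) ^ 2)
      (algebraMap k (FreeAlgebra k (Fin 2)) a₁)
  | r2 : CRel a₀ a₁ a₂ a₃ (ι k 0 * (ι k 1) ^ 2 + ι k 1 * ι k 0 * ι k 1 + (ι k 1) ^ 2 * ι k 0)
      (algebraMap k (FreeAlgebra k (Fin 2)) a₂)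
  | r3 : CRel a₀ a₁ a₂ a₃ ((ι k 1) ^ 3) (algebraMap k (FreeAlgebra k (Fin 2)) a₃)

/-- The generalized Clifford algebra of the binary cubic form a₀u³ + a₁u²v + a₂uv² + a₃v³. -/
abbrev CliffordAlg (a₀ a₁ a₂ a₃ : k) := RingQuot (CRel k a₀ a₁ a₂ a₃)

/-- The generator x of the generalized Clifford algebra. -/
def cx (a₀ a₁ a₂ a₃ : k) : CliffordAlg k a₀ a₁ a₂ a₃ :=
  RingQuot.mkAlgHom k (CRel k a₀ a₁ a₂ a₃) (ι k 0)

/-- The generator y of the generalized Clifford algebra. -/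
def cy (a₀ a₁ a₂ a₃ : k) : CliffordAlg k a₀ a₁ a₂ a₃ :=
  RingQuot.mkAlgHom k (CRel k a₀ a₁ a₂ a₃) (ι k 1)

/-- The discriminant of the binary cubic form a₀u³ + a₁u²v + a₂uv² + a₃v³. -/
def cubicDisc (a₀ a₁ a₂ a₃ : k) : k :=
  -27 * a₀ ^ 2 * a₃ ^ 2 + a₁ ^ 2 * a₂ ^ 2 + 18 * a₀ * a₁ * a₂ * a₃ -
    4 * a₀ * a₂ ^ 3 - 4 * a₁ ^ 3 * a₃

end

noncomputable section

variable (k : Type*) [Field k]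

/-- γ_f = (xy)² − y²x² in the generalized Clifford algebra A_f. -/
def cγ (a₀ a₁ a₂ a₃ : k) : CliffordAlg k a₀ a₁ a₂ a₃ :=
  (cx k a₀ a₁ a₂ a₃ * cy k a₀ a₁ a₂ a₃) ^ 2 - cy k a₀ a₁ a₂ a₃ ^ 2 * cx k a₀ a₁ a₂ a₃ ^ 2

/-- The images in A_f of the 18 basis elements. -/
def cBasis (a₀ a₁ a₂ a₃ : k) : Fin 18 → CliffordAlg k a₀ a₁ a₂ a₃ :=
  letI x := cx k a₀ a₁ a₂ a₃
  letI y := cy k a₀ a₁ a₂ a₃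
  ![1,
    x, y,
    x ^ 2, x * y, y * x, y ^ 2,
    x ^ 2 * y, x * y ^ 2, y ^ 2 * x, y * x ^ 2,
    x ^ 2 * y ^ 2, x * y * x * y, x * y * x ^ 2, y ^ 2 * x * y,
    x ^ 2 * y ^ 2 * x, x * y * x * y ^ 2,
    x ^ 2 * y ^ 2 * x * y]

/-!
Left multiplication by `x` and by `y` sends each of the 18 words to a combination of the words with
coefficients in `k[γ]`. Since `1` is a word and `γ` is central, the words span. Conversely, read
these multiplication tables as two endomorphisms of `k[t]¹⁸`, with `t` in place of `γ`. They satisfy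
the defining relations of the Clifford algebra, so they give a representation of it, in which `γ`
acts as `t` and the `j`-th word sends the first standard basis vector to the `j`-th one. Hence `γ`
is transcendental over `k` and the words are linearly independent over `k[γ]`.
-/

section CliffordPair

variable {R B : Type*} [CommRing R] [Ring B] [Algebra R B]

/-- The elements `x`, `y` satisfy the defining relations of the generalized Clifford algebra of
`a₀u³ + a₁u²v + a₂uv² + a₃v³`, that is `(ux + vy)³ = f(u, v)` for central `u`, `v`. -/
structure IsCliffordPair (a₀ a₁ a₂ a₃ : R) (x y : B) : Prop where
  uuu : x ^ 3 = a₀ • (1 : B)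
  uuv : x ^ 2 * y + x * y * x + y * x ^ 2 = a₁ • (1 : B)
  uvv : x * y ^ 2 + y * x * y + y ^ 2 * x = a₂ • (1 : B)
  vvv : y ^ 3 = a₃ • (1 : B)

/-- The element `γ = (xy)² - y²x²`, central as soon as `x`, `y` generate and form a Clifford
pair. -/
def cliffordGamma (x y : B) : B := (x * y) ^ 2 - y ^ 2 * x ^ 2

/-- The 18 words in `x` and `y` which form the basis of the generalized Clifford algebra. -/
def cliffordWord (x y : B) : Fin 18 → B :=
  ![1,
    x, y,
    x ^ 2, x * y, y * x, y ^ 2,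
    x ^ 2 * y, x * y ^ 2, y ^ 2 * x, y * x ^ 2,
    x ^ 2 * y ^ 2, x * y * x * y, x * y * x ^ 2, y ^ 2 * x * y,
    x ^ 2 * y ^ 2 * x, x * y * x * y ^ 2,
    x ^ 2 * y ^ 2 * x * y]

theorem map_cliffordGamma {C F : Type*} [Ring C] [FunLike F B C] [RingHomClass F B C] (φ : F)
    (x y : B) : φ (cliffordGamma x y) = cliffordGamma (φ x) (φ y) := by
  simp only [cliffordGamma, map_sub, map_pow, map_mul]

theorem map_cliffordWord {C F : Type*} [Ring C] [FunLike F B C] [RingHomClass F B C] (φ : F)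
    (x y : B) (j : Fin 18) : φ (cliffordWord x y j) = cliffordWord (φ x) (φ y) j := by
  fin_cases j <;> simp [cliffordWord]

namespace IsCliffordPair

variable {a₀ a₁ a₂ a₃ t : R} {x y : B}

theorem algebraMap_iff {S : Type*} [CommRing S] [Algebra R S] [Algebra S B]
    [IsScalarTower R S B] :
    IsCliffordPair (algebraMap R S a₀) (algebraMap R S a₁) (algebraMap R S a₂)
      (algebraMap R S a₃) x y ↔ IsCliffordPair a₀ a₁ a₂ a₃ x y := by
  have hs (r : R) : algebraMap R S r • (1 : B) = r • (1 : B) := algebraMap_smul S r 1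
  constructor <;> rintro ⟨h₀, h₁, h₂, h₃⟩ <;> constructor <;> simp_all only

theorem swap (h : IsCliffordPair a₀ a₁ a₂ a₃ x y) : IsCliffordPair a₃ a₂ a₁ a₀ y x where
  uuu := h.vvv
  uuv := by rw [← h.uvv]; abel
  uvv := by rw [← h.uuv]; abel
  vvv := h.uuu

theorem cliffordGamma_swap (h : IsCliffordPair a₀ a₁ a₂ a₃ x y) :
    cliffordGamma y x = cliffordGamma x y := by
  unfold cliffordGamma
  linear_combination (norm := noncomm_ring) y * h.uuv - h.uuv * y

theorem commute_cliffordGamma_left (h : IsCliffordPair a₀ a₁ a₂ a₃ x y) :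
    Commute x (cliffordGamma x y) := by
  unfold cliffordGamma Commute SemiconjBy
  linear_combination (norm := noncomm_ring)
    h.uuv * (x * y) - x * y * h.uuv - y * h.uuu * y + y ^ 2 * h.uuu

theorem commute_cliffordGamma_right (h : IsCliffordPair a₀ a₁ a₂ a₃ x y) :
    Commute y (cliffordGamma x y) :=
  h.cliffordGamma_swap ▸ h.swap.commute_cliffordGamma_left

theorem cliffordGamma_mem_center (h : IsCliffordPair a₀ a₁ a₂ a₃ x y)
    (hxy : Algebra.adjoin R {x, y} = ⊤) : cliffordGamma x y ∈ Subalgebra.center R B := by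
  have hle : Algebra.adjoin R {x, y} ≤ Subalgebra.centralizer R {cliffordGamma x y} := by
    rw [Algebra.adjoin_le_iff, Set.pair_subset_iff]
    simp only [SetLike.mem_coe, Subalgebra.mem_centralizer_iff, Set.mem_singleton_iff, forall_eq]
    exact ⟨h.commute_cliffordGamma_left.symm, h.commute_cliffordGamma_right.symm⟩
  rw [Subalgebra.mem_center_iff]
  intro b
  have hb : b ∈ Algebra.adjoin R {x, y} := hxy ▸ Algebra.mem_top
  exact ((Subalgebra.mem_centralizer_iff R).1 (hle hb) _ rfl).symm

theorem x_mul_yx (h : IsCliffordPair a₀ a₁ a₂ a₃ x y) :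
    x * (y * x) = a₁ • 1 - x ^ 2 * y - y * x ^ 2 := by
  linear_combination (norm := noncomm_ring) h.uuv

theorem x_mul_yyx (h : IsCliffordPair a₀ a₁ a₂ a₃ x y) :
    x * (y ^ 2 * x) = a₂ • x - x ^ 2 * y ^ 2 - x * y * x * y := by
  linear_combination (norm := noncomm_ring) x * h.uvv

theorem x_mul_xyxy (h : IsCliffordPair a₀ a₁ a₂ a₃ x y) :
    x * (x * y * x * y) = a₂ • x ^ 2 - a₀ • y ^ 2 - x ^ 2 * y ^ 2 * x := by
  linear_combination (norm := noncomm_ring)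
    h.uuv * (x * y) - x * y * h.uuv - y * h.uuu * y + x * h.uvv * x

theorem x_mul_xyxx (h : IsCliffordPair a₀ a₁ a₂ a₃ x y) :
    x * (x * y * x ^ 2) = a₁ • x ^ 2 - a₀ • (x * y) - a₀ • (y * x) := by
  linear_combination (norm := noncomm_ring) h.uuv * x ^ 2 - x * y * h.uuu - y * h.uuu * x

theorem x_mul_yyxy (h : IsCliffordPair a₀ a₁ a₂ a₃ x y) :
    x * (y ^ 2 * x * y) = a₂ • (x * y) - a₃ • x ^ 2 - x * y * x * y ^ 2 := by
  linear_combination (norm := noncomm_ring) x * y * h.uvv - x * h.vvv * x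

theorem x_mul_xyxyy (h : IsCliffordPair a₀ a₁ a₂ a₃ x y) :
    x * (x * y * x * y ^ 2) = a₂ • (x ^ 2 * y) - a₀ • a₃ • 1 - x ^ 2 * y ^ 2 * x * y := by
  linear_combination (norm := noncomm_ring) h.x_mul_xyxy * y - a₀ • h.vvv

theorem y_mul_xy (h : IsCliffordPair a₀ a₁ a₂ a₃ x y) :
    y * (x * y) = a₂ • 1 - x * y ^ 2 - y ^ 2 * x := by
  linear_combination (norm := noncomm_ring) h.uvv

theorem y_mul_xxy (h : IsCliffordPair a₀ a₁ a₂ a₃ x y) :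
    y * (x ^ 2 * y) = a₁ • y - x ^ 2 * y ^ 2 - x * y * x * y := by
  linear_combination (norm := noncomm_ring) h.uuv * y

theorem y_mul_xyy (h : IsCliffordPair a₀ a₁ a₂ a₃ x y) :
    y * (x * y ^ 2) = a₂ • y - a₃ • x - y ^ 2 * x * y := by
  linear_combination (norm := noncomm_ring) y * h.uvv - h.vvv * x

theorem y_mul_yxx (hγ : cliffordGamma x y = t • 1) :
    y * (y * x ^ 2) = x * y * x * y - t • 1 := by
  rw [← hγ, cliffordGamma]
  noncomm_ring

theorem y_mul_xxyy (h : IsCliffordPair a₀ a₁ a₂ a₃ x y) :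
    y * (x ^ 2 * y ^ 2) = a₁ • y ^ 2 - a₃ • x ^ 2 - x * y * x * y ^ 2 := by
  linear_combination (norm := noncomm_ring) h.y_mul_xxy * y - x ^ 2 * h.vvv

theorem y_mul_xyxy (h : IsCliffordPair a₀ a₁ a₂ a₃ x y) (hγ : cliffordGamma x y = t • 1) :
    y * (x * y * x * y) = t • y + a₃ • x ^ 2 := by
  unfold cliffordGamma at hγ
  linear_combination (norm := noncomm_ring) y * hγ + h.vvv * x ^ 2

theorem y_mul_xyxx (h : IsCliffordPair a₀ a₁ a₂ a₃ x y) (hγ : cliffordGamma x y = t • 1) :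
    y * (x * y * x ^ 2) = t • x + x ^ 2 * y ^ 2 * x := by
  rw [← h.cliffordGamma_swap, cliffordGamma] at hγ
  linear_combination (norm := noncomm_ring) hγ * x

theorem y_mul_xxyyx (h : IsCliffordPair a₀ a₁ a₂ a₃ x y) (hγ : cliffordGamma x y = t • 1) :
    y * (x ^ 2 * y ^ 2 * x) =
      t • (x * y) + a₂ • (y * x ^ 2) + a₁ • (x * y ^ 2) + a₁ • (y ^ 2 * x) - a₁ • a₂ • 1 +
        x ^ 2 * y ^ 2 * x * y := by
  unfold cliffordGamma at hγ
  linear_combination (norm := noncomm_ring [smul_add, smul_comm a₂ a₁, smul_comm a₃ a₀])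
    h.uuv * (y ^ 2 * x) - x ^ 2 * h.vvv * x - x * y * h.uvv * x + x * y ^ 2 * h.uuv
      + x * hγ * y - h.x_mul_xyxyy - a₂ • h.uuv - a₃ • h.uuu

theorem y_mul_xyxyy (h : IsCliffordPair a₀ a₁ a₂ a₃ x y) (hγ : cliffordGamma x y = t • 1) :
    y * (x * y * x * y ^ 2) = t • y ^ 2 + a₃ • (x ^ 2 * y) := by
  linear_combination (norm := noncomm_ring) h.y_mul_xyxy hγ * y

theorem y_mul_xxyyxy (h : IsCliffordPair a₀ a₁ a₂ a₃ x y) (hγ : cliffordGamma x y = t • 1) :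
    y * (x ^ 2 * y ^ 2 * x * y) =
      a₁ • (y ^ 2 * x * y) + t • (x * y ^ 2) - a₂ • (x * y * x * y) + a₃ • (x * y * x ^ 2) := by
  linear_combination (norm := noncomm_ring [smul_add, smul_neg, smul_comm a₂ a₁, smul_comm a₃ a₁])
    h.y_mul_xxyyx hγ * y + x ^ 2 * y * h.y_mul_xyy - x ^ 2 * h.vvv * (x * y)
      + a₁ • (x * h.vvv) + a₂ • h.y_mul_xxy - a₃ • (x * h.uuv)

end IsCliffordPair

end CliffordPair

section MultiplicationTables

variable {R M : Type*} [CommRing R] [AddCommGroup M] [Module R M] {a₀ a₁ a₂ a₃ t : R}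

/-- The table of left multiplication by `x` on the words `cliffordWord x y`, with the words
replaced by an arbitrary family `w`. -/
def xTable (a₀ a₁ a₂ a₃ : R) (w : Fin 18 → M) : Fin 18 → M :=
  ![w 1, w 3, w 4, a₀ • w 0,
    w 7, a₁ • w 0 - w 7 - w 10,
    w 8, a₀ • w 2,
    w 11, a₂ • w 1 - w 11 - w 12,
    w 13, a₀ • w 6,
    a₂ • w 3 - a₀ • w 6 - w 15,
    a₁ • w 3 - a₀ • w 4 - a₀ • w 5,
    a₂ • w 4 - a₃ • w 3 - w 16,
    a₀ • w 9,
    a₂ • w 7 - a₀ • a₃ • w 0 - w 17,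
    a₀ • w 14]

/-- The table of left multiplication by `y` on the words `cliffordWord x y`, with the words
replaced by an arbitrary family `w` and `cliffordGamma x y` by the scalar `t`. -/
def yTable (a₁ a₂ a₃ t : R) (w : Fin 18 → M) : Fin 18 → M :=
  ![w 2, w 5, w 6, w 10,
    a₂ • w 0 - w 8 - w 9,
    w 9, a₃ • w 0,
    a₁ • w 2 - w 11 - w 12,
    a₂ • w 2 - a₃ • w 1 - w 14,
    a₃ • w 1,
    w 12 - t • w 0,
    a₁ • w 6 - a₃ • w 3 - w 16,
    t • w 2 + a₃ • w 3,
    t • w 1 + w 15,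
    a₃ • w 4,
    t • w 4 + a₂ • w 10 + a₁ • w 8 + a₁ • w 9 - a₁ • a₂ • w 0 + w 17,
    t • w 6 + a₃ • w 7,
    a₁ • w 14 + t • w 8 - a₂ • w 12 + a₃ • w 13]

namespace IsCliffordPair

variable {B : Type*} [Ring B] [Algebra R B] {x y : B}

theorem x_mul_x_mul_x (h : IsCliffordPair a₀ a₁ a₂ a₃ x y) : x * (x * x) = a₀ • 1 := by
  rw [← h.uuu, pow_succ', pow_two]

theorem x_mul_x_mul_x_mul (h : IsCliffordPair a₀ a₁ a₂ a₃ x y) (z : B) :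
    x * (x * (x * z)) = a₀ • z := by
  rw [← smul_one_mul, ← h.x_mul_x_mul_x, mul_assoc, mul_assoc]

theorem x_mul_cliffordWord (h : IsCliffordPair a₀ a₁ a₂ a₃ x y) (j : Fin 18) :
    x * cliffordWord x y j = xTable a₀ a₁ a₂ a₃ (cliffordWord x y) j := by
  fin_cases j <;> simp only [cliffordWord, xTable, Fin.zero_eta, Fin.mk_one, Fin.reduceFinMk,
    Fin.isValue, Matrix.cons_val, h.x_mul_yx, h.x_mul_yyx, h.x_mul_xyxy, h.x_mul_xyxx,
    h.x_mul_yyxy, h.x_mul_xyxyy]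
  all_goals noncomm_ring [h.x_mul_x_mul_x, h.x_mul_x_mul_x_mul]

theorem y_mul_cliffordWord (h : IsCliffordPair a₀ a₁ a₂ a₃ x y)
    (hγ : cliffordGamma x y = t • 1) (j : Fin 18) :
    y * cliffordWord x y j = yTable a₁ a₂ a₃ t (cliffordWord x y) j := by
  fin_cases j <;> simp only [cliffordWord, yTable, Fin.zero_eta, Fin.mk_one, Fin.reduceFinMk,
    Fin.isValue, Matrix.cons_val, h.y_mul_xy, h.y_mul_xxy, h.y_mul_xyy, y_mul_yxx hγ, h.y_mul_xxyy,
    h.y_mul_xyxy hγ, h.y_mul_xyxx hγ, h.y_mul_xxyyx hγ, h.y_mul_xyxyy hγ, h.y_mul_xxyyxy hγ]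
  all_goals noncomm_ring [h.swap.x_mul_x_mul_x, h.swap.x_mul_x_mul_x_mul]

end IsCliffordPair

section Endomorphisms

variable {X Y : Module.End R M} {w : Fin 18 → M}

theorem isCliffordPair_of_tables (hX : ∀ j, X (w j) = xTable a₀ a₁ a₂ a₃ w j)
    (hY : ∀ j, Y (w j) = yTable a₁ a₂ a₃ t w j) (hw : Submodule.span R (Set.range w) = ⊤) :
    IsCliffordPair a₀ a₁ a₂ a₃ X Y := by
  constructor <;> refine LinearMap.ext_on_range (v := w) hw fun j => ?_ <;>
    simp only [pow_succ, pow_zero, one_mul, Module.End.mul_apply, LinearMap.add_apply,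
      LinearMap.smul_apply, Module.End.one_apply] <;>
    fin_cases j <;> simp only [hX, hY, xTable, yTable, Fin.reduceFinMk, Fin.zero_eta, Fin.mk_one,
      Fin.isValue, Matrix.cons_val, map_add, map_sub, map_smul] <;> module

theorem cliffordGamma_of_tables (hX : ∀ j, X (w j) = xTable a₀ a₁ a₂ a₃ w j)
    (hY : ∀ j, Y (w j) = yTable a₁ a₂ a₃ t w j) (hw : Submodule.span R (Set.range w) = ⊤) :
    cliffordGamma X Y = t • 1 := by
  refine LinearMap.ext_on_range (v := w) hw fun j => ?_
  simp only [cliffordGamma, pow_succ, pow_zero, one_mul, Module.End.mul_apply, LinearMap.sub_apply,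
    LinearMap.smul_apply, Module.End.one_apply]
  fin_cases j <;> simp only [hX, hY, xTable, yTable, Fin.reduceFinMk, Fin.zero_eta, Fin.mk_one,
    Fin.isValue, Matrix.cons_val, map_add, map_sub, map_smul] <;> module

theorem cliffordWord_apply_of_tables (hX : ∀ j, X (w j) = xTable a₀ a₁ a₂ a₃ w j)
    (hY : ∀ j, Y (w j) = yTable a₁ a₂ a₃ t w j) (j : Fin 18) :
    cliffordWord X Y j (w 0) = w j := by
  fin_cases j <;> simp only [cliffordWord, pow_succ, pow_zero, one_mul, Module.End.mul_apply,
    Module.End.one_apply, hX, hY, xTable, yTable, Fin.reduceFinMk, Fin.zero_eta, Fin.mk_one,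
    Fin.isValue, Matrix.cons_val, map_sub, map_smul] <;> module

end Endomorphisms

theorem xTable_mem_span (w : Fin 18 → M) (j : Fin 18) :
    xTable a₀ a₁ a₂ a₃ w j ∈ Submodule.span R (Set.range w) := by
  have hw (i : Fin 18) : w i ∈ Submodule.span R (Set.range w) :=
    Submodule.subset_span (Set.mem_range_self i)
  fin_cases j <;> simp only [xTable, Fin.zero_eta, Fin.mk_one, Fin.reduceFinMk, Fin.isValue,
    Matrix.cons_val] <;> apply_rules [add_mem, sub_mem, Submodule.smul_mem]

theorem yTable_mem_span (w : Fin 18 → M) (j : Fin 18) :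
    yTable a₁ a₂ a₃ t w j ∈ Submodule.span R (Set.range w) := by
  have hw (i : Fin 18) : w i ∈ Submodule.span R (Set.range w) :=
    Submodule.subset_span (Set.mem_range_self i)
  fin_cases j <;> simp only [yTable, Fin.zero_eta, Fin.mk_one, Fin.reduceFinMk, Fin.isValue,
    Matrix.cons_val] <;> apply_rules [add_mem, sub_mem, Submodule.smul_mem]

end MultiplicationTables

section Span

variable {R B : Type*} [CommRing R] [Ring B] [Algebra R B]

theorem mul_mem_span_range {ι : Type*} {w : ι → B} {b : B}
    (hb : ∀ j, b * w j ∈ Submodule.span R (Set.range w)) {s : B}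
    (hs : s ∈ Submodule.span R (Set.range w)) : b * s ∈ Submodule.span R (Set.range w) := by
  have hle : Submodule.span R (Set.range w) ≤
      (Submodule.span R (Set.range w)).comap (LinearMap.mulLeft R b) :=
    Submodule.span_le.2 (Set.range_subset_iff.2 hb)
  exact hle hs

theorem span_eq_top_of_adjoin_eq_top {ι : Type*} {w : ι → B} {s : Set B}
    (hs : Algebra.adjoin R s = ⊤) (h1 : 1 ∈ Submodule.span R (Set.range w))
    (hw : ∀ b ∈ s, ∀ j, b * w j ∈ Submodule.span R (Set.range w)) :
    Submodule.span R (Set.range w) = ⊤ := by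
  refine Submodule.eq_top_iff'.2 fun b => ?_
  have hb : b ∈ Algebra.adjoin R s := hs ▸ Algebra.mem_top
  suffices ∀ z ∈ Submodule.span R (Set.range w), b * z ∈ Submodule.span R (Set.range w) from
    mul_one b ▸ this 1 h1
  induction hb using Algebra.adjoin_induction with
  | mem b hb => exact fun z hz => mul_mem_span_range (hw b hb) hz
  | algebraMap r =>
    intro z hz
    rw [← Algebra.smul_def]
    exact Submodule.smul_mem _ r hz
  | add b c _ _ ihb ihc => exact fun z hz => add_mul b c z ▸ add_mem (ihb z hz) (ihc z hz)
  | mul b c _ _ ihb ihc => exact fun z hz => (mul_assoc b c z).symm ▸ ihb _ (ihc z hz)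

variable {a₀ a₁ a₂ a₃ t : R} {x y : B}

theorem IsCliffordPair.span_cliffordWord (h : IsCliffordPair a₀ a₁ a₂ a₃ x y)
    (hγ : cliffordGamma x y = t • 1) (hxy : Algebra.adjoin R {x, y} = ⊤) :
    Submodule.span R (Set.range (cliffordWord x y)) = ⊤ := by
  refine span_eq_top_of_adjoin_eq_top hxy (Submodule.subset_span ⟨0, rfl⟩) ?_
  rintro b (rfl | rfl) j
  · rw [h.x_mul_cliffordWord]
    exact xTable_mem_span _ j
  · rw [h.y_mul_cliffordWord hγ]
    exact yTable_mem_span _ j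

end Span

section RegularRepresentation

variable {R : Type*} [CommRing R] (a₀ a₁ a₂ a₃ t : R)

/-- The endomorphism of `R¹⁸` given by the table of left multiplication by `x`. -/
def regularX : Module.End R (Fin 18 → R) :=
  (Pi.basisFun R (Fin 18)).constr R (xTable a₀ a₁ a₂ a₃ (Pi.basisFun R (Fin 18)))

/-- The endomorphism of `R¹⁸` given by the table of left multiplication by `y`, with `t` in the
role of `γ`. -/
def regularY : Module.End R (Fin 18 → R) :=
  (Pi.basisFun R (Fin 18)).constr R (yTable a₁ a₂ a₃ t (Pi.basisFun R (Fin 18)))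

theorem regularX_basisFun (j : Fin 18) : regularX a₀ a₁ a₂ a₃ (Pi.basisFun R (Fin 18) j) =
    xTable a₀ a₁ a₂ a₃ (Pi.basisFun R (Fin 18)) j :=
  (Pi.basisFun R (Fin 18)).constr_basis R _ j

theorem regularY_basisFun (j : Fin 18) : regularY a₁ a₂ a₃ t (Pi.basisFun R (Fin 18) j) =
    yTable a₁ a₂ a₃ t (Pi.basisFun R (Fin 18)) j :=
  (Pi.basisFun R (Fin 18)).constr_basis R _ j

theorem isCliffordPair_regular :
    IsCliffordPair a₀ a₁ a₂ a₃ (regularX a₀ a₁ a₂ a₃) (regularY a₁ a₂ a₃ t) :=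
  isCliffordPair_of_tables (regularX_basisFun a₀ a₁ a₂ a₃) (regularY_basisFun a₁ a₂ a₃ t)
    (Pi.basisFun R (Fin 18)).span_eq

theorem cliffordGamma_regular :
    cliffordGamma (regularX a₀ a₁ a₂ a₃) (regularY a₁ a₂ a₃ t) = t • 1 :=
  cliffordGamma_of_tables (regularX_basisFun a₀ a₁ a₂ a₃) (regularY_basisFun a₁ a₂ a₃ t)
    (Pi.basisFun R (Fin 18)).span_eq

variable {a₀ a₁ a₂ a₃ t}

theorem linearIndependent_cliffordWord {B : Type*} [Ring B] [Algebra R B] {x y : B}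
    (ρ : B →ₐ[R] Module.End R (Fin 18 → R)) (hx : ρ x = regularX a₀ a₁ a₂ a₃)
    (hy : ρ y = regularY a₁ a₂ a₃ t) : LinearIndependent R (cliffordWord x y) := by
  let e := Pi.basisFun R (Fin 18)
  have hρ : (LinearMap.applyₗ (e 0) ∘ₗ ρ.toLinearMap) ∘ cliffordWord x y = e := by
    funext j
    change ρ (cliffordWord x y j) (e 0) = e j
    rw [map_cliffordWord, hx, hy]
    exact cliffordWord_apply_of_tables (regularX_basisFun a₀ a₁ a₂ a₃)
      (regularY_basisFun a₁ a₂ a₃ t) j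
  exact .of_comp _ (hρ ▸ e.linearIndependent)

end RegularRepresentation

section CliffordAlg

open Polynomial

variable {k}
variable (a₀ a₁ a₂ a₃ : k)

theorem isCliffordPair_cx_cy :
    IsCliffordPair a₀ a₁ a₂ a₃ (cx k a₀ a₁ a₂ a₃) (cy k a₀ a₁ a₂ a₃) where
  uuu := by
    simpa [cx, Algebra.algebraMap_eq_smul_one] using
      RingQuot.mkAlgHom_rel k (CRel.r0 (a₀ := a₀) (a₁ := a₁) (a₂ := a₂) (a₃ := a₃))
  uuv := by
    simpa [cx, cy, Algebra.algebraMap_eq_smul_one] using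
      RingQuot.mkAlgHom_rel k (CRel.r1 (a₀ := a₀) (a₁ := a₁) (a₂ := a₂) (a₃ := a₃))
  uvv := by
    simpa [cx, cy, Algebra.algebraMap_eq_smul_one] using
      RingQuot.mkAlgHom_rel k (CRel.r2 (a₀ := a₀) (a₁ := a₁) (a₂ := a₂) (a₃ := a₃))
  vvv := by
    simpa [cy, Algebra.algebraMap_eq_smul_one] using
      RingQuot.mkAlgHom_rel k (CRel.r3 (a₀ := a₀) (a₁ := a₁) (a₂ := a₂) (a₃ := a₃))

theorem adjoin_cx_cy :
    Algebra.adjoin k {cx k a₀ a₁ a₂ a₃, cy k a₀ a₁ a₂ a₃} = ⊤ := by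
  have himage : RingQuot.mkAlgHom k (CRel k a₀ a₁ a₂ a₃) '' Set.range (FreeAlgebra.ι k) =
      {cx k a₀ a₁ a₂ a₃, cy k a₀ a₁ a₂ a₃} := by
    ext b
    simp [cx, cy, Fin.exists_fin_two, eq_comm]
  rw [← himage, ← AlgHom.map_adjoin, FreeAlgebra.adjoin_range_ι, Algebra.map_top,
    AlgHom.range_eq_top]
  exact RingQuot.mkAlgHom_surjective k _

variable {a₀ a₁ a₂ a₃}

section Lift

variable {B : Type*} [Ring B] [Algebra k B] {x y : B}

/-- The universal property of the generalized Clifford algebra: a Clifford pair in a `k`-algebra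
is the image of the generators under an algebra homomorphism. -/
def cliffordLift (h : IsCliffordPair a₀ a₁ a₂ a₃ x y) : CliffordAlg k a₀ a₁ a₂ a₃ →ₐ[k] B :=
  RingQuot.liftAlgHom k ⟨FreeAlgebra.lift k ![x, y], fun _ _ hr => by
    cases hr <;> simp [h.uuu, h.uuv, h.uvv, h.vvv, Algebra.algebraMap_eq_smul_one]⟩

theorem cliffordLift_cx (h : IsCliffordPair a₀ a₁ a₂ a₃ x y) :
    cliffordLift h (cx k a₀ a₁ a₂ a₃) = x := by
  simp [cliffordLift, cx]

theorem cliffordLift_cy (h : IsCliffordPair a₀ a₁ a₂ a₃ x y) :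
    cliffordLift h (cy k a₀ a₁ a₂ a₃) = y := by
  simp [cliffordLift, cy]

end Lift

variable (a₀ a₁ a₂ a₃)

/-- The `k[X]`-algebra structure on the generalized Clifford algebra in which `X` acts as `γ`. -/
instance gammaAlgebra : Algebra k[X] (CliffordAlg k a₀ a₁ a₂ a₃) :=
  (aeval (cγ k a₀ a₁ a₂ a₃)).toRingHom.toAlgebra' fun p b => by
    have hγ : cγ k a₀ a₁ a₂ a₃ ∈ Subalgebra.center k (CliffordAlg k a₀ a₁ a₂ a₃) :=
      (isCliffordPair_cx_cy a₀ a₁ a₂ a₃).cliffordGamma_mem_center (adjoin_cx_cy a₀ a₁ a₂ a₃)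
    have hp : aeval (cγ k a₀ a₁ a₂ a₃) p ∈ Subalgebra.center k (CliffordAlg k a₀ a₁ a₂ a₃) :=
      Algebra.adjoin_le (Set.singleton_subset_iff.2 hγ) (aeval_mem_adjoin_singleton k _)
    exact (Subalgebra.mem_center_iff.1 hp b).symm

instance : IsScalarTower k k[X] (CliffordAlg k a₀ a₁ a₂ a₃) :=
  .of_algebraMap_eq fun r => (aeval_C (cγ k a₀ a₁ a₂ a₃) r).symm

theorem polynomial_smul_eq (p : k[X]) (b : CliffordAlg k a₀ a₁ a₂ a₃) :
    p • b = aeval (cγ k a₀ a₁ a₂ a₃) p * b := rfl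

/-- The representation of the generalized Clifford algebra on `k[X]¹⁸` by the multiplication
tables. -/
def regularRep : CliffordAlg k a₀ a₁ a₂ a₃ →ₐ[k[X]] Module.End k[X] (Fin 18 → k[X]) :=
  let ρ := cliffordLift (IsCliffordPair.algebraMap_iff.1
    (isCliffordPair_regular (C a₀) (C a₁) (C a₂) (C a₃) X))
  { ρ with
    commutes' := fun p => by
      have hγ : ρ (cγ k a₀ a₁ a₂ a₃) = algebraMap k[X] _ X := by
        change ρ (cliffordGamma _ _) = _
        rw [map_cliffordGamma, cliffordLift_cx, cliffordLift_cy, cliffordGamma_regular,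
          Algebra.algebraMap_eq_smul_one]
      change ρ (aeval _ p) = _
      rw [← aeval_algHom_apply, hγ, aeval_algebraMap_apply, aeval_X_left_apply] }

theorem regularRep_cx : regularRep a₀ a₁ a₂ a₃ (cx k a₀ a₁ a₂ a₃) =
    regularX (C a₀) (C a₁) (C a₂) (C a₃) :=
  cliffordLift_cx _

theorem regularRep_cy : regularRep a₀ a₁ a₂ a₃ (cy k a₀ a₁ a₂ a₃) =
    regularY (C a₁) (C a₂) (C a₃) X :=
  cliffordLift_cy _

/-- The basis of the generalized Clifford algebra over `k[X]`, where `X` acts as `γ`. -/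
def polynomialBasis : Module.Basis (Fin 18) k[X] (CliffordAlg k a₀ a₁ a₂ a₃) :=
  have h := IsCliffordPair.algebraMap_iff.2 (isCliffordPair_cx_cy a₀ a₁ a₂ a₃)
  have hγ : cliffordGamma (cx k a₀ a₁ a₂ a₃) (cy k a₀ a₁ a₂ a₃) = (X : k[X]) • 1 := by
    rw [polynomial_smul_eq, aeval_X, mul_one]
    rfl
  have hxy : Algebra.adjoin k[X] {cx k a₀ a₁ a₂ a₃, cy k a₀ a₁ a₂ a₃} = ⊤ := by
    rw [← Algebra.adjoin_adjoin_of_tower k, adjoin_cx_cy, Algebra.coe_top, Algebra.adjoin_univ]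
  .mk (linearIndependent_cliffordWord _ (regularRep_cx a₀ a₁ a₂ a₃) (regularRep_cy a₀ a₁ a₂ a₃))
    (h.span_cliffordWord hγ hxy).ge

theorem coe_polynomialBasis : ⇑(polynomialBasis a₀ a₁ a₂ a₃) = cBasis k a₀ a₁ a₂ a₃ := by
  rw [polynomialBasis, Module.Basis.coe_mk]
  rfl

theorem transcendental_cγ : Transcendental k (cγ k a₀ a₁ a₂ a₃) := by
  refine transcendental_iff.2 fun p hp => ?_
  have hp1 : p • polynomialBasis a₀ a₁ a₂ a₃ 0 = 0 := by rw [polynomial_smul_eq, hp, zero_mul]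
  simpa using congrArg (fun b => (polynomialBasis a₀ a₁ a₂ a₃).repr b 0) hp1

/-- The basis of the generalized Clifford algebra over `k[γ]`. -/
def gammaBasis : Module.Basis (Fin 18)
    (Algebra.adjoin k ({cγ k a₀ a₁ a₂ a₃} : Set (CliffordAlg k a₀ a₁ a₂ a₃)))
    (CliffordAlg k a₀ a₁ a₂ a₃) :=
  (polynomialBasis a₀ a₁ a₂ a₃).mapCoeffs
    (algEquivOfTranscendental k _ (transcendental_cγ a₀ a₁ a₂ a₃)).toRingEquiv fun p b => by
      rw [Subalgebra.smul_def, polynomial_smul_eq]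
      simp

theorem coe_gammaBasis : ⇑(gammaBasis a₀ a₁ a₂ a₃) = cBasis k a₀ a₁ a₂ a₃ := by
  rw [gammaBasis, Module.Basis.coe_mapCoeffs, coe_polynomialBasis]

end CliffordAlg

theorem stmt5_general (a₀ a₁ a₂ a₃ : k) :
    ∀ a : CliffordAlg k a₀ a₁ a₂ a₃,
      ∃! c : Fin 18 → Algebra.adjoin k ({cγ k a₀ a₁ a₂ a₃} : Set (CliffordAlg k a₀ a₁ a₂ a₃)),
        a = ∑ i, (c i : CliffordAlg k a₀ a₁ a₂ a₃) * cBasis k a₀ a₁ a₂ a₃ i := by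
  intro a
  have hsum (c) : (gammaBasis a₀ a₁ a₂ a₃).equivFun.symm c =
      ∑ i, (c i : CliffordAlg k a₀ a₁ a₂ a₃) * cBasis k a₀ a₁ a₂ a₃ i := by
    rw [Module.Basis.equivFun_symm_apply, coe_gammaBasis]
    rfl
  simpa only [← hsum, eq_comm] using
    (gammaBasis a₀ a₁ a₂ a₃).equivFun.symm.bijective.existsUnique a

theorem stmt5 (h2 : (2 : k) ≠ 0) (h3 : (3 : k) ≠ 0)
    (ω : k) (hω : IsPrimitiveRoot ω 3)
    (a₀ a₁ a₂ a₃ : k) (hΔ : cubicDisc k a₀ a₁ a₂ a₃ ≠ 0)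
    (e : k) (he : e ^ 2 = -108 * cubicDisc k a₀ a₁ a₂ a₃) :
    ∀ a : CliffordAlg k a₀ a₁ a₂ a₃,
      ∃! c : Fin 18 → Algebra.adjoin k ({cγ k a₀ a₁ a₂ a₃} : Set (CliffordAlg k a₀ a₁ a₂ a₃)),
        a = ∑ i, (c i : CliffordAlg k a₀ a₁ a₂ a₃) * cBasis k a₀ a₁ a₂ a₃ i :=
  stmt5_general k a₀ a₁ a₂ a₃

end
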